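/- There exist absolute constants C, C' > 0 such that for every integer n ≥ 2 and every ε ∈ (0, 1/2) there is a finite set T ⊂ ℝ with |T| ≤ C·(ln n)·ln(1/ε), depending only on n and ε, with the following universal property. Let V ∈ ℝ^{n×2|T|} be the matrix [V_T ; R·V_T] obtained by concatenating the columns of the Vandermonde matrix V_T with the columns of R·V_T, where R is the reversal matrix. Then for every positive semidefinite Hankel matrix H ∈ ℝ^{n×n} there exist a diagonal matrix D* ∈ ℝ^{2|T|×2|T|} and a Hankel matrix H* ∈ ℝ^{n×n} with H*_{i,j} = 0 whenever C'·ln(1/ε) ≤ i+j ≤ 2(n−1) − C'·ln(1/ε), such that ‖V D* V^T + H* − H‖_F ≤ ε‖H‖_F and Σ_i |D*_{i,i}| ≤ C·ln(1/ε)·(ln n)·‖H‖_F. -/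

import Mathlib

open scoped BigOperators

/-- A matrix is Hankel if its entries depend only on the sum of the indices. -/
def IsHankel {n : ℕ} (A : Matrix (Fin n) (Fin n) ℝ) : Prop :=
  ∀ i j k l : Fin n, (i : ℕ) + (j : ℕ) = (k : ℕ) + (l : ℕ) → A i j = A k l

/-- Euclidean (ℓ₂) norm of a vector. -/
noncomputable def euclNorm {n : ℕ} (x : Fin n → ℝ) : ℝ := Real.sqrt (∑ i, x i ^ 2)

/-- Spectral norm of a matrix: supremum of ‖Ax‖₂ over the Euclidean unit ball. -/
noncomputable def specNorm {n : ℕ} (A : Matrix (Fin n) (Fin n) ℝ) : ℝ :=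
  ⨆ x : {x : Fin n → ℝ // euclNorm x ≤ 1}, euclNorm (A.mulVec x.1)

/-- Frobenius norm of a matrix. -/
noncomputable def froNorm {n : ℕ} (A : Matrix (Fin n) (Fin n) ℝ) : ℝ :=
  Real.sqrt (∑ i, ∑ j, (A i j) ^ 2)
/-- The matrix `V = [V_T ; R·V_T] ∈ ℝ^{n × 2|T|}`: its columns indexed by the left copy of
`T` are the moment vectors `v_n(x)`, and its columns indexed by the right copy are the
reversed moment vectors (the columns of `R·V_T`, i.e. `(R·V_T)_{i,x} = x^{n−1−i}`). -/
noncomputable def bigV (n : ℕ) (T : Finset ℝ) : Matrix (Fin n) (T ⊕ T) ℝ :=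
  Matrix.of fun (i : Fin n) =>
    Sum.elim (fun x : T => (x : ℝ) ^ (i : ℕ)) (fun x : T => (x : ℝ) ^ (n - 1 - (i : ℕ)))

/-!
A positive definite Hankel matrix is the moment matrix of a positive measure on `ℝ`: its Gram
vectors are the orbit of one vector under a symmetric operator. Reflecting the atoms outside
`[-1, 1]` by `x ↦ x⁻¹` and letting positive definite matrices degenerate, every positive
semidefinite Hankel matrix has entries `∑ l, (α l * x l ^ k + β l * x l ^ (N - k))` with
`k = i + j`, `N = 2 (n - 1)`, `|x l| ≤ 1` and `α, β ≥ 0`. It remains to approximate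
`k ↦ x ^ k = ± exp (-k u)` by such functions with `x` in a fixed finite set. On an interval of `u`
whose length is a small multiple of its left end plus `1 / N`, interpolation at `O(log (1 / ε))`
Fekete points has error `ε |x| ^ (k / 2)`, and `O(log n)` such intervals cover `[0, 1]`; for
`|x| ≤ exp (-1)` and `k ≥ C' log (1 / ε)` the power itself is that small. Finally,
`∑ l, α l * |x l| ^ p` is at most the entry of `H` with index sum `p` when `p` is even, and
rounding `i / 2` to an even index is at most four-to-one, so the Frobenius norm of the error is
`O(ε) ‖H‖`.
-/

section Exponential

lemma abs_exp_sub_sum_range_le {r : ℝ} (hr : 1 ≤ r) (x : ℝ) (m : ℕ) :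
    |Real.exp x - ∑ i ∈ Finset.range m, x ^ i / (i.factorial : ℝ)| ≤
      Real.exp (r * |x|) / r ^ m := by
  have hasSum_exp (y : ℝ) : HasSum (fun i : ℕ => y ^ i / (i.factorial : ℝ)) (Real.exp y) := by
    rw [Real.exp_eq_exp_ℝ]
    exact NormedSpace.expSeries_div_hasSum_exp y
  have tail_x := (hasSum_nat_add_iff' m).2 (hasSum_exp x)
  have tail_rx := ((hasSum_nat_add_iff' m).2 (hasSum_exp (r * |x|))).div_const (r ^ m)
  have term_le (i : ℕ) : ‖x ^ (i + m) / ((i + m).factorial : ℝ)‖ ≤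
      (r * |x|) ^ (i + m) / ((i + m).factorial : ℝ) / r ^ m := by
    rw [norm_div, norm_pow, Real.norm_eq_abs, Real.norm_natCast, div_right_comm, mul_pow, pow_add r,
      mul_right_comm, mul_div_cancel_right₀ _ (by positivity)]
    gcongr
    exact le_mul_of_one_le_left (by positivity) (one_le_pow₀ hr)
  calc |Real.exp x - ∑ i ∈ Finset.range m, x ^ i / (i.factorial : ℝ)|
      ≤ (Real.exp (r * |x|) - ∑ i ∈ Finset.range m, (r * |x|) ^ i / (i.factorial : ℝ)) / r ^ m := by
        rw [← tail_x.tsum_eq]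
        exact tsum_of_norm_bounded tail_rx term_le
    _ ≤ Real.exp (r * |x|) / r ^ m := by
        gcongr
        exact sub_le_self _ (Finset.sum_nonneg fun i _ => by positivity)

end Exponential

section Fekete

open Matrix Polynomial

lemma eval_eq_sum_eval_basis {F ι : Type*} [Field F] [Fintype ι] [DecidableEq ι] {v : ι → F}
    (hv : Function.Injective v) {p : F[X]} (hp : p.degree < Fintype.card ι) (y : F) :
    p.eval y = ∑ j, (Lagrange.basis Finset.univ v j).eval y * p.eval (v j) := by
  conv_lhs => rw [Lagrange.eq_interpolate (s := Finset.univ) hv.injOn hp]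
  simp only [Lagrange.interpolate_apply, eval_finsetSum, eval_mul, eval_C, mul_comm]

lemma det_vandermonde_update {F : Type*} [Field F] {m : ℕ} {v : Fin m → F}
    (hv : Function.Injective v) (j : Fin m) (y : F) :
    (vandermonde (Function.update v j y)).det =
      (Lagrange.basis Finset.univ v j).eval y * (vandermonde v).det := by
  have moments_eq : (fun k : Fin m => y ^ (k : ℕ)) =
      ∑ i, (Lagrange.basis Finset.univ v i).eval y • vandermonde v i := by
    funext k
    have hdeg : (X ^ (k : ℕ) : F[X]).degree < Fintype.card (Fin m) := by
      rw [degree_X_pow, Fintype.card_fin]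
      exact_mod_cast k.isLt
    simpa [vandermonde_apply] using eval_eq_sum_eval_basis hv hdeg y
  have update_eq : vandermonde (Function.update v j y) =
      (vandermonde v).updateRow j (fun k : Fin m => y ^ (k : ℕ)) := by
    ext i k
    rcases eq_or_ne i j with rfl | hij
    · simp [vandermonde_apply]
    · simp [vandermonde_apply, hij]
  rw [update_eq, moments_eq, det_updateRow_sum, smul_eq_mul]

/-- `v` is a system of `m` Fekete points of `K`: distinct points of `K` at which the Vandermonde
determinant is largest in absolute value. They are interpolation nodes on which Lagrange
interpolation is stable. -/
structure IsFekete {m : ℕ} (K : Set ℝ) (v : Fin m → ℝ) : Prop where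
  mem (j : Fin m) : v j ∈ K
  injective : Function.Injective v
  abs_det_le (w : Fin m → ℝ) (hw : ∀ j, w j ∈ K) :
    |(vandermonde w).det| ≤ |(vandermonde v).det|

lemma exists_isFekete {K : Set ℝ} (hK : IsCompact K) (hK' : K.Infinite) (m : ℕ) :
    ∃ v : Fin m → ℝ, IsFekete K v := by
  let w : Fin m → ℝ := fun j => hK'.natEmbedding K j
  have hw : ∀ j, w j ∈ K := fun j => (hK'.natEmbedding K j).2
  have w_injective : Function.Injective w := fun i j hij =>
    Fin.ext ((hK'.natEmbedding K).injective (Subtype.ext hij))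
  have hcont : Continuous fun v : Fin m → ℝ => |(vandermonde v).det| := by
    refine continuous_abs.comp (Continuous.matrix_det (continuous_matrix fun i j => ?_))
    simp only [vandermonde_apply]
    fun_prop
  obtain ⟨v, hv, hmax⟩ := (isCompact_univ_pi fun _ : Fin m => hK).exists_isMaxOn
    ⟨w, fun j _ => hw j⟩ hcont.continuousOn
  have hdet : 0 < |(vandermonde v).det| :=
    (abs_pos.2 (det_vandermonde_ne_zero_iff.2 w_injective)).trans_le (hmax fun j _ => hw j)
  exact ⟨v, fun j => hv j trivial, det_vandermonde_ne_zero_iff.1 (abs_pos.1 hdet),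
    fun u hu => hmax fun j _ => hu j⟩

namespace IsFekete

variable {m : ℕ} {K : Set ℝ} {v : Fin m → ℝ}

lemma abs_eval_basis_le_one (hv : IsFekete K v) {y : ℝ} (hy : y ∈ K) (j : Fin m) :
    |(Lagrange.basis Finset.univ v j).eval y| ≤ 1 := by
  have hdet : 0 < |(vandermonde v).det| :=
    abs_pos.2 (det_vandermonde_ne_zero_iff.2 hv.injective)
  refine le_of_mul_le_mul_right ?_ hdet
  rw [one_mul, ← abs_mul, ← det_vandermonde_update hv.injective]
  refine hv.abs_det_le _ fun i => ?_
  rcases eq_or_ne i j with rfl | hij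
  · simpa using hy
  · simpa [hij] using hv.mem i

-- Lebesgue's lemma: the Lebesgue constant of Fekete points is at most `m`.
lemma abs_sum_eval_basis_sub_le (hv : IsFekete K v) {f : ℝ → ℝ} {p : ℝ[X]} (hp : p.degree < m)
    {η : ℝ} (hfp : ∀ z ∈ K, |f z - p.eval z| ≤ η) {y : ℝ} (hy : y ∈ K) :
    |∑ j, (Lagrange.basis Finset.univ v j).eval y * f (v j) - f y| ≤ (m + 1) * η := by
  set l : Fin m → ℝ := fun j => (Lagrange.basis Finset.univ v j).eval y
  have reproduce : p.eval y = ∑ j, l j * p.eval (v j) :=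
    eval_eq_sum_eval_basis hv.injective (by simpa using hp) y
  have node_error : |∑ j, l j * (f (v j) - p.eval (v j))| ≤ m * η := by
    calc |∑ j, l j * (f (v j) - p.eval (v j))|
        ≤ ∑ j, |l j * (f (v j) - p.eval (v j))| := Finset.abs_sum_le_sum_abs _ _
      _ ≤ ∑ _j : Fin m, η := by
          refine Finset.sum_le_sum fun j _ => ?_
          rw [abs_mul]
          exact (mul_le_of_le_one_left (abs_nonneg _) (hv.abs_eval_basis_le_one hy j)).trans
            (hfp _ (hv.mem j))
      _ = m * η := by simp
  calc |∑ j, l j * f (v j) - f y|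
      = |∑ j, l j * (f (v j) - p.eval (v j)) - (f y - p.eval y)| := by
        rw [reproduce]
        simp only [mul_sub, Finset.sum_sub_distrib]
        ring_nf
    _ ≤ m * η + η := (abs_sub _ _).trans (add_le_add node_error (hfp y hy))
    _ = (m + 1) * η := by ring

end IsFekete

end Fekete

section PowerNet

lemma exists_polynomial_abs_exp_sub_le (a τ : ℝ) {r : ℝ} (hr : 1 ≤ r) (m : ℕ) :
    ∃ p : Polynomial ℝ, p.degree < m ∧ ∀ z : ℝ, |z| ≤ 1 →
      |Real.exp (a + τ * z) - p.eval z| ≤ Real.exp (a + r * |τ|) / r ^ m := by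
  refine ⟨∑ i ∈ Finset.range m,
    Polynomial.C (Real.exp a * (τ ^ i / (i.factorial : ℝ))) * Polynomial.X ^ i, ?_, fun z hz => ?_⟩
  · refine (Polynomial.degree_sum_le _ _).trans_lt
      ((Finset.sup_lt_iff (WithBot.bot_lt_coe m)).2 fun i hi => ?_)
    exact (Polynomial.degree_C_mul_X_pow_le i _).trans_lt (Nat.cast_lt.2 (Finset.mem_range.1 hi))
  · have eval_eq : (∑ i ∈ Finset.range m,
        Polynomial.C (Real.exp a * (τ ^ i / (i.factorial : ℝ))) * Polynomial.X ^ i).eval z =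
          Real.exp a * ∑ i ∈ Finset.range m, (τ * z) ^ i / (i.factorial : ℝ) := by
      rw [Polynomial.eval_finsetSum, Finset.mul_sum]
      refine Finset.sum_congr rfl fun i _ => ?_
      rw [Polynomial.eval_C_mul, Polynomial.eval_X_pow, mul_pow]
      ring
    have abs_le : |τ * z| ≤ |τ| := by
      rw [abs_mul]
      exact mul_le_of_le_one_right (abs_nonneg τ) hz
    rw [eval_eq, Real.exp_add, Real.exp_add, ← mul_sub, abs_mul, Real.abs_exp, mul_div_assoc]
    gcongr
    exact (abs_exp_sub_sum_range_le hr _ m).trans (by gcongr)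

lemma IsFekete.abs_sum_eval_basis_mul_exp_sub_le {m : ℕ} {v : Fin m → ℝ}
    (hv : IsFekete (Set.Icc 0 1) v) {y : ℝ} (hy : y ∈ Set.Icc (0 : ℝ) 1) {a τ : ℝ}
    (hτ : 0 ≤ τ) (hτa : 32 * τ ≤ a + 1) :
    |∑ j, (Lagrange.basis Finset.univ v j).eval y * Real.exp (-(a + τ * v j)) -
        Real.exp (-(a + τ * y))| ≤ 2 * (1 / 4) ^ m * Real.exp (-(a + τ * y) / 2) := by
  obtain ⟨p, p_degree, p_approx⟩ :=
    exists_polynomial_abs_exp_sub_le (-a) (-τ) (r := 8) (by norm_num) m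
  have exp_approx (z : ℝ) (hz : z ∈ Set.Icc (0 : ℝ) 1) :
      |Real.exp (-(a + τ * z)) - p.eval z| ≤ Real.exp (-a + 8 * τ) / 8 ^ m := by
    have := p_approx z (abs_le.2 ⟨by linarith [hz.1], hz.2⟩)
    rwa [neg_mul, ← neg_add, abs_neg, abs_of_nonneg hτ] at this
  have exp_half_le : Real.exp (1 / 2) ≤ 2 :=
    calc Real.exp (1 / 2) ≤ Real.exp (Real.log 2) :=
          Real.exp_le_exp.2 (by linarith [Real.log_two_gt_d9])
      _ = 2 := Real.exp_log two_pos
  have exp_le : Real.exp (-a + 8 * τ) ≤ 2 * Real.exp (-(a + τ * y) / 2) :=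
    calc Real.exp (-a + 8 * τ) ≤ Real.exp (1 / 2 + -(a + τ * y) / 2) :=
          Real.exp_le_exp.2 (by linarith [mul_le_of_le_one_right hτ hy.2])
      _ ≤ 2 * Real.exp (-(a + τ * y) / 2) := by rw [Real.exp_add]; gcongr
  have succ_le : (m : ℝ) + 1 ≤ 2 ^ m := by exact_mod_cast Nat.lt_two_pow_self (n := m)
  calc _ ≤ (m + 1) * (Real.exp (-a + 8 * τ) / 8 ^ m) :=
        hv.abs_sum_eval_basis_sub_le p_degree exp_approx hy
    _ ≤ 2 ^ m * (2 * Real.exp (-(a + τ * y) / 2) / 8 ^ m) := by gcongr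
    _ = 2 * (2 / 8) ^ m * Real.exp (-(a + τ * y) / 2) := by rw [div_pow]; ring
    _ = _ := by norm_num

/-- The point at relative position `y ∈ [0, 1]` in the `s`-th cell of a partition of `[0, ∞)` into
consecutive cells: cell `s` has left end `((33/32)^s - 1) / N`, so that its length is
`(left end + 1 / N) / 32`. -/
noncomputable def cellPoint (N s : ℕ) (y : ℝ) : ℝ :=
  ((33 / 32) ^ s * (1 + y / 32) - 1) / N

/-- The number of cells of `cellPoint N` needed to cover `[0, 1]`. -/
noncomputable def cellCount (N : ℕ) : ℕ :=
  ⌊33 * Real.log (N + 1)⌋₊ + 1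

lemma lt_cellCount_of_pow_le {N s : ℕ} (hs : (33 / 32 : ℝ) ^ s ≤ N + 1) : s < cellCount N := by
  have log_ge : 1 / 33 ≤ Real.log (33 / 32) := by
    have := Real.one_sub_inv_le_log_of_pos (x := 33 / 32) (by norm_num)
    norm_num at this ⊢
    exact this
  have log_le : s * Real.log (33 / 32) ≤ Real.log (N + 1) := by
    rw [← Real.log_pow]
    exact Real.log_le_log (by positivity) hs
  have : (s : ℝ) * (1 / 33) ≤ s * Real.log (33 / 32) := by gcongr
  exact Nat.lt_succ_of_le (Nat.le_floor (by linarith))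

lemma exists_eq_cellPoint {N : ℕ} (hN : 0 < N) {u : ℝ} (hu : u ∈ Set.Icc (0 : ℝ) 1) :
    ∃ s < cellCount N, ∃ y ∈ Set.Icc (0 : ℝ) 1, u = cellPoint N s y := by
  have hN' : (0 : ℝ) < N := Nat.cast_pos.2 hN
  obtain ⟨s, left_le, lt_right⟩ := exists_nat_pow_near (x := 1 + N * u) (y := (33 / 32 : ℝ))
    (le_add_of_nonneg_right (mul_nonneg hN'.le hu.1)) (by norm_num)
  have hq : (0 : ℝ) < (33 / 32) ^ s := by positivity
  refine ⟨s, lt_cellCount_of_pow_le ?_, 32 * ((1 + N * u) / (33 / 32) ^ s - 1), ⟨?_, ?_⟩, ?_⟩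
  · linarith [mul_le_of_le_one_right hN'.le hu.2]
  · linarith [(one_le_div hq).2 left_le]
  · rw [pow_succ'] at lt_right
    linarith [(div_lt_iff₀ hq).2 lt_right]
  · rw [cellPoint]
    field_simp
    ring

lemma IsFekete.abs_sum_eval_basis_mul_exp_cellPoint_sub_le {m : ℕ} {v : Fin m → ℝ}
    (hv : IsFekete (Set.Icc 0 1) v) {y : ℝ} (hy : y ∈ Set.Icc (0 : ℝ) 1) {k N : ℕ} (hk : k ≤ N)
    (s : ℕ) :
    |∑ j, (Lagrange.basis Finset.univ v j).eval y * Real.exp (-cellPoint N s (v j)) ^ k -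
        Real.exp (-cellPoint N s y) ^ k| ≤
      2 * (1 / 4) ^ m * Real.exp (-(k * cellPoint N s y) / 2) := by
  have cell_affine (z : ℝ) : k * cellPoint N s z =
      k * cellPoint N s 0 + k * (33 / 32) ^ s / (32 * N) * z := by
    simp only [cellPoint, div_eq_mul_inv, mul_inv]
    ring
  have width_le : 32 * (k * (33 / 32) ^ s / (32 * N) : ℝ) ≤ k * cellPoint N s 0 + 1 := by
    have width_eq : 32 * (k * (33 / 32) ^ s / (32 * N) : ℝ) = k * cellPoint N s 0 + k / N := by
      simp only [cellPoint, div_eq_mul_inv, mul_inv]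
      ring
    rw [width_eq]
    gcongr
    exact div_le_one_of_le₀ (Nat.cast_le.2 hk) N.cast_nonneg
  have exp_pow (z : ℝ) : Real.exp (-cellPoint N s z) ^ k =
      Real.exp (-(k * cellPoint N s 0 + k * (33 / 32) ^ s / (32 * N) * z)) := by
    rw [← Real.exp_nat_mul, mul_neg, cell_affine]
  simp only [exp_pow]
  rw [cell_affine y]
  exact hv.abs_sum_eval_basis_mul_exp_sub_le hy (by positivity) width_le

/-- Every function `k ↦ x ^ k` with `|x| ≤ 1` is, for `K ≤ k ≤ N`, a combination of the functions
`k ↦ t ^ k` with `t ∈ T`, of coefficients with `ℓ¹` norm at most `Λ` and up to an error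
`δ |x| ^ (k / 2)`. The exponent is rounded down to an arbitrary natural number `p ≤ k / 2`. -/
def IsPowerNet (T : Finset ℝ) (Λ δ K : ℝ) (N : ℕ) : Prop :=
  ∀ x : ℝ, |x| ≤ 1 → ∃ c : T → ℝ, ∑ t, |c t| ≤ Λ ∧
    ∀ k p : ℕ, K ≤ k → k ≤ N → 2 * p ≤ k →
      |∑ t, c t * (t : ℝ) ^ k - x ^ k| ≤ δ * |x| ^ p

/-- The candidate net: the points `± exp (-u)` where `u` runs through the images of the nodes `v` in
the cells covering `[0, 1]`. The signs range over `SignType`, which adds the harmless node `0`. -/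
noncomputable def powerNet (N : ℕ) {m : ℕ} (v : Fin m → ℝ) : Finset ℝ :=
  Finset.univ.image fun q : SignType × Fin (cellCount N) × Fin m =>
    (q.1 : ℝ) * Real.exp (-cellPoint N q.2.1 (v q.2.2))

lemma card_powerNet_le (N : ℕ) {m : ℕ} (v : Fin m → ℝ) :
    (powerNet N v).card ≤ 3 * (cellCount N * m) := by
  refine Finset.card_image_le.trans ?_
  rw [Finset.card_univ, Fintype.card_prod, Fintype.card_prod, Fintype.card_fin, Fintype.card_fin]
  rfl

lemma exists_pushforward {ι κ : Type*} [Fintype ι] [Fintype κ] (ν : ι → κ) (l : ι → ℝ) :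
    ∃ c : κ → ℝ, ∑ t, |c t| ≤ ∑ j, |l j| ∧
      ∀ φ : κ → ℝ, ∑ t, c t * φ t = ∑ j, l j * φ (ν j) := by
  classical
  refine ⟨fun t => ∑ j with ν j = t, l j, ?_, fun φ => ?_⟩
  · calc ∑ t, |∑ j with ν j = t, l j| ≤ ∑ t, ∑ j with ν j = t, |l j| :=
          Finset.sum_le_sum fun t _ => Finset.abs_sum_le_sum_abs _ _
      _ = ∑ j, |l j| := Finset.sum_fiberwise _ _ _
  · rw [← Finset.sum_fiberwise Finset.univ ν]
    refine Finset.sum_congr rfl fun t _ => ?_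
    rw [Finset.sum_mul]
    exact Finset.sum_congr rfl fun j hj => by rw [(Finset.mem_filter.1 hj).2]

lemma pow_le_exp_mul_pow {r K : ℝ} (hr : 0 ≤ r) (hr' : r ≤ Real.exp (-1)) {k p : ℕ} (hk : K ≤ k)
    (hp : 2 * p ≤ k) : r ^ k ≤ Real.exp (-K / 2) * r ^ p := by
  have half_le : (k : ℝ) ≤ 2 * (k - p : ℕ) := by exact_mod_cast (by omega : k ≤ 2 * (k - p))
  calc r ^ k = r ^ (k - p) * r ^ p := by rw [← pow_add]; congr 1; omega
    _ ≤ Real.exp (-1) ^ (k - p) * r ^ p := by gcongr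
    _ ≤ Real.exp (-K / 2) * r ^ p := by
        rw [← Real.exp_nat_mul]
        gcongr
        linarith

lemma IsFekete.exists_powerNet_coeff {N m : ℕ} {v : Fin m → ℝ}
    (hv : IsFekete (Set.Icc 0 1) v) (hN : 0 < N) {x : ℝ} (hx : |x| ≤ 1)
    (hx' : Real.exp (-1) ≤ |x|) :
    ∃ c : powerNet N v → ℝ, ∑ t, |c t| ≤ m ∧ ∀ k p : ℕ, k ≤ N → 2 * p ≤ k →
      |∑ t, c t * (t : ℝ) ^ k - x ^ k| ≤ 2 * (1 / 4) ^ m * |x| ^ p := by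
  have x_pos : 0 < |x| := (Real.exp_pos _).trans_le hx'
  obtain ⟨s, hs, y, hy, log_eq⟩ := exists_eq_cellPoint hN (u := -Real.log |x|)
    ⟨neg_nonneg.2 (Real.log_nonpos x_pos.le hx), neg_le.1 ((Real.le_log_iff_exp_le x_pos).2 hx')⟩
  have abs_x_eq : |x| = Real.exp (-cellPoint N s y) := by rw [← log_eq, neg_neg, Real.exp_log x_pos]
  let σ : SignType := SignType.sign x
  let ν (j : Fin m) : powerNet N v :=
    ⟨_, Finset.mem_image_of_mem _ (Finset.mem_univ (σ, ⟨s, hs⟩, j))⟩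
  obtain ⟨c, c_le, c_sum⟩ :=
    exists_pushforward ν fun j => (Lagrange.basis Finset.univ v j).eval y
  refine ⟨c, c_le.trans ?_, fun k p hk hp => ?_⟩
  · calc ∑ j, |(Lagrange.basis Finset.univ v j).eval y| ≤ ∑ _j : Fin m, (1 : ℝ) :=
          Finset.sum_le_sum fun j _ => hv.abs_eval_basis_le_one hy j
      _ = m := by simp
  · have σ_pow_le : |(σ : ℝ) ^ k| ≤ 1 := by
      rw [abs_pow]
      refine pow_le_one₀ (abs_nonneg _) ?_
      cases σ <;> simp
    have factor : ∑ t, c t * (t : ℝ) ^ k - x ^ k = (σ : ℝ) ^ k *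
        (∑ j, (Lagrange.basis Finset.univ v j).eval y * Real.exp (-cellPoint N s (v j)) ^ k -
          Real.exp (-cellPoint N s y) ^ k) := by
      rw [c_sum fun t => (t : ℝ) ^ k, mul_sub, ← mul_pow, ← abs_x_eq, sign_mul_abs, Finset.mul_sum]
      refine congrArg (· - x ^ k) (Finset.sum_congr rfl fun j _ => ?_)
      simp only [ν, mul_pow]
      ring
    have decay : Real.exp (-(k * cellPoint N s y) / 2) ≤ |x| ^ p := by
      have hp' : (p : ℝ) * 2 ≤ k := by exact_mod_cast (by omega : p * 2 ≤ k)
      have cell_nonneg : 0 ≤ cellPoint N s y :=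
        log_eq ▸ neg_nonneg.2 (Real.log_nonpos x_pos.le hx)
      rw [abs_x_eq, ← Real.exp_nat_mul, Real.exp_le_exp]
      nlinarith
    calc |∑ t, c t * (t : ℝ) ^ k - x ^ k|
        ≤ 2 * (1 / 4) ^ m * Real.exp (-(k * cellPoint N s y) / 2) := by
          rw [factor, abs_mul]
          exact (mul_le_of_le_one_left (abs_nonneg _) σ_pow_le).trans
            (hv.abs_sum_eval_basis_mul_exp_cellPoint_sub_le hy hk s)
      _ ≤ 2 * (1 / 4) ^ m * |x| ^ p := by gcongr

lemma IsFekete.isPowerNet_powerNet {N m : ℕ} {v : Fin m → ℝ} (hv : IsFekete (Set.Icc 0 1) v)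
    (hN : 0 < N) {δ K : ℝ} (hm : 2 * (1 / 4) ^ m ≤ δ) (hK : Real.exp (-K / 2) ≤ δ) :
    IsPowerNet (powerNet N v) m δ K N := by
  intro x hx
  rcases le_total |x| (Real.exp (-1)) with x_small | x_large
  · refine ⟨0, by simp, fun k p hk _ hp => ?_⟩
    calc |∑ t, (0 : powerNet N v → ℝ) t * (t : ℝ) ^ k - x ^ k| = |x| ^ k := by simp
      _ ≤ Real.exp (-K / 2) * |x| ^ p := pow_le_exp_mul_pow (abs_nonneg x) x_small hk hp
      _ ≤ δ * |x| ^ p := by gcongr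
  · obtain ⟨c, c_le, c_approx⟩ := hv.exists_powerNet_coeff hN hx x_large
    refine ⟨c, c_le, fun k p _ hkN hp => (c_approx k p hkN hp).trans ?_⟩
    gcongr

end PowerNet

section Moments

open Matrix

open scoped MatrixOrder in
lemma exists_isUnit_eq_transpose_mul_self {ι : Type*} [Fintype ι] [DecidableEq ι]
    {H : Matrix ι ι ℝ} (hH : H.PosDef) : ∃ B : Matrix ι ι ℝ, IsUnit B.det ∧ H = Bᵀ * B := by
  obtain ⟨B, B_unit, H_eq⟩ :=
    CStarAlgebra.isStrictlyPositive_iff_eq_star_mul_self.1 hH.isStrictlyPositive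
  rw [star_eq_conjTranspose, conjTranspose_eq_transpose_of_trivial] at H_eq
  exact ⟨B, (isUnit_iff_isUnit_det B).1 B_unit, H_eq⟩

lemma exists_dotProduct_pow_mulVec_eq_sum {ι : Type*} [Fintype ι] [DecidableEq ι]
    {A : Matrix ι ι ℝ} (hA : A.IsHermitian) (b : ι → ℝ) :
    ∃ lam w : ι → ℝ, 0 ≤ w ∧ ∀ k : ℕ, b ⬝ᵥ (A ^ k *ᵥ b) = ∑ l, w l * lam l ^ k := by
  let U : Matrix ι ι ℝ := hA.eigenvectorUnitary
  have pow_eq (k : ℕ) : A ^ k = U * diagonal (fun l => hA.eigenvalues l ^ k) * Uᵀ := by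
    conv_lhs => rw [hA.spectral_theorem]
    rw [← map_pow, Unitary.conjStarAlgAut_apply, diagonal_pow, star_eq_conjTranspose,
      conjTranspose_eq_transpose_of_trivial]
    rfl
  refine ⟨hA.eigenvalues, fun l => (Uᵀ *ᵥ b) l ^ 2, fun l => sq_nonneg _, fun k => ?_⟩
  rw [pow_eq, ← mulVec_mulVec, ← mulVec_mulVec, dotProduct_mulVec, ← mulVec_transpose]
  simp only [dotProduct, mulVec_diagonal]
  exact Finset.sum_congr rfl fun l _ => by ring

variable {n : ℕ}

lemma IsHankel.exists_seq {H : Matrix (Fin n) (Fin n) ℝ} (hH : IsHankel H) :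
    ∃ s : ℕ → ℝ, ∀ i j : Fin n, H i j = s (i + j) := by
  rcases Nat.eq_zero_or_pos n with rfl | n_pos
  · exact ⟨0, fun i => i.elim0⟩
  · refine ⟨fun k => H ⟨min k (n - 1), by omega⟩ ⟨min (k - (n - 1)) (n - 1), by omega⟩,
      fun i j => hH _ _ _ _ ?_⟩
    dsimp only
    omega

-- The Gram vectors of `H` are the orbit of the first one under the compression of the shift, which
-- is symmetric because the shifted matrix is again Hankel.
lemma exists_isHermitian_mulVec_col {s : ℕ → ℝ} {B : Matrix (Fin n) (Fin n) ℝ}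
    (hB : IsUnit B.det) (hs : Matrix.of (fun i j : Fin n => s (i + j)) = Bᵀ * B) :
    ∃ A : Matrix (Fin n) (Fin n) ℝ, A.IsHermitian ∧
      ∀ i j : Fin n, (j : ℕ) = i + 1 → A *ᵥ B.col i = B.col j := by
  let M : Matrix (Fin n) (Fin n) ℝ := Matrix.of fun i j => s (i + j + 1)
  have M_symm : Mᵀ = M := by
    ext i j
    simp only [M, transpose_apply, of_apply, add_comm (j : ℕ)]
  refine ⟨(B⁻¹)ᵀ * M * B⁻¹, ?_, fun i j hij => ?_⟩
  · rw [IsHermitian, conjTranspose_eq_transpose_of_trivial]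
    simp only [transpose_mul, transpose_transpose, M_symm, Matrix.mul_assoc]
  · have M_col : M.col i = (Bᵀ * B).col j := by
      ext l
      simp only [← hs, M, col_apply, of_apply, hij, add_assoc]
    calc ((B⁻¹)ᵀ * M * B⁻¹) *ᵥ B.col i = (((B⁻¹)ᵀ * M * B⁻¹) * B).col i := rfl
      _ = (B⁻¹)ᵀ *ᵥ M.col i := by rw [Matrix.mul_assoc, nonsing_inv_mul _ hB, Matrix.mul_one]; rfl
      _ = ((B⁻¹)ᵀ * (Bᵀ * B)).col j := by rw [M_col]; rfl
      _ = B.col j := by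
        rw [← Matrix.mul_assoc, ← transpose_mul, mul_nonsing_inv _ hB, transpose_one,
          Matrix.one_mul]

lemma IsHankel.exists_eq_sum_pow {H : Matrix (Fin n) (Fin n) ℝ} (hH : IsHankel H)
    (hH' : H.PosDef) :
    ∃ lam w : Fin n → ℝ, 0 ≤ w ∧ ∀ i j : Fin n, H i j = ∑ l, w l * lam l ^ ((i : ℕ) + j) := by
  rcases Nat.eq_zero_or_pos n with rfl | n_pos
  · exact ⟨0, 0, le_rfl, fun i => i.elim0⟩
  obtain ⟨s, hs⟩ := hH.exists_seq
  obtain ⟨B, B_unit, H_eq⟩ := exists_isUnit_eq_transpose_mul_self hH'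
  obtain ⟨A, A_herm, A_col⟩ := exists_isHermitian_mulVec_col B_unit ((ext hs).symm.trans H_eq)
  have A_symm : Aᵀ = A := by rw [← conjTranspose_eq_transpose_of_trivial, A_herm.eq]
  let b : Fin n → ℝ := B.col ⟨0, n_pos⟩
  have A_pow (k : ℕ) (hk : k < n) : A ^ k *ᵥ b = B.col ⟨k, hk⟩ := by
    induction k with
    | zero => rw [pow_zero, one_mulVec]
    | succ k ih => rw [pow_succ', ← mulVec_mulVec, ih (by omega), A_col _ ⟨k + 1, hk⟩ rfl]
  obtain ⟨lam, w, hw, moments⟩ := exists_dotProduct_pow_mulVec_eq_sum A_herm b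
  refine ⟨lam, w, hw, fun i j => ?_⟩
  calc H i j = B.col i ⬝ᵥ B.col j := by rw [H_eq]; rfl
    _ = (A ^ (i : ℕ) *ᵥ b) ⬝ᵥ (A ^ (j : ℕ) *ᵥ b) := by rw [A_pow i i.2, A_pow j j.2]
    _ = b ⬝ᵥ (A ^ ((i : ℕ) + j) *ᵥ b) := by
      rw [pow_add, ← mulVec_mulVec, dotProduct_mulVec b, ← mulVec_transpose, transpose_pow, A_symm]
    _ = ∑ l, w l * lam l ^ ((i : ℕ) + j) := moments _

lemma exists_posDef_isHankel (n : ℕ) :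
    ∃ G : Matrix (Fin n) (Fin n) ℝ, G.PosDef ∧ IsHankel G := by
  let V : Matrix (Fin n) (Fin n) ℝ := vandermonde fun i => ((i : ℕ) : ℝ)
  have V_det : V.det ≠ 0 :=
    det_vandermonde_ne_zero_iff.2 (Nat.cast_injective.comp Fin.val_injective)
  refine ⟨Vᴴ * V, PosDef.conjTranspose_mul_self V ?_, fun i j k l h => ?_⟩
  · exact mulVec_injective_iff_isUnit.2 ((isUnit_iff_isUnit_det _).2 (isUnit_iff_ne_zero.2 V_det))
  · simp only [conjTranspose_eq_transpose_of_trivial, mul_apply, transpose_apply, V,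
      vandermonde_apply, ← pow_add, h]

/-- The `k`-th moment, `k ≤ N`, of the measure which puts a mass `α l` at `x l` and a mass, scaled
to contribute `β l` to the `N`-th moment, at `(x l)⁻¹`. The second family replaces atoms outside
`[-1, 1]`, and stays meaningful when such an atom escapes to infinity (`x l = 0`). -/
def twoSidedMoment {ι : Type*} [Fintype ι] (x α β : ι → ℝ) (N k : ℕ) : ℝ :=
  ∑ l, (α l * x l ^ k + β l * x l ^ (N - k))

lemma exists_reflect_eq {N : ℕ} (hN : Even N) {w : ℝ} (hw : 0 ≤ w) (lam : ℝ) :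
    ∃ x α β : ℝ, |x| ≤ 1 ∧ 0 ≤ α ∧ 0 ≤ β ∧
      ∀ k ≤ N, w * lam ^ k = α * x ^ k + β * x ^ (N - k) := by
  rcases le_total |lam| 1 with h_in | h_out
  · exact ⟨lam, w, 0, h_in, hw, le_rfl, fun k _ => by ring⟩
  · have lam_ne : lam ≠ 0 := abs_pos.1 (one_pos.trans_le h_out)
    refine ⟨lam⁻¹, 0, w * lam ^ N, ?_, le_rfl, mul_nonneg hw (hN.pow_nonneg lam), fun k hk => ?_⟩
    · rw [abs_inv]
      exact inv_le_one_of_one_le₀ h_out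
    · rw [zero_mul, zero_add, ← pow_mul_pow_sub lam hk, inv_pow, ← mul_assoc,
        mul_inv_cancel_right₀ (pow_ne_zero _ lam_ne)]

lemma IsHankel.exists_eq_twoSidedMoment_of_posDef {H : Matrix (Fin n) (Fin n) ℝ}
    (hH : IsHankel H) (hH' : H.PosDef) :
    ∃ x α β : Fin n → ℝ, (∀ l, |x l| ≤ 1) ∧ 0 ≤ α ∧ 0 ≤ β ∧
      ∀ i j : Fin n, H i j = twoSidedMoment x α β (2 * (n - 1)) (i + j) := by
  obtain ⟨lam, w, hw, H_eq⟩ := hH.exists_eq_sum_pow hH'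
  choose x α β hx hα hβ fold using fun l =>
    exists_reflect_eq (even_two_mul (n - 1)) (hw l) (lam l)
  refine ⟨x, α, β, hx, hα, hβ, fun i j => ?_⟩
  rw [H_eq, twoSidedMoment]
  exact Finset.sum_congr rfl fun l _ => fold l _ (by omega)

section

variable {ι : Type*} [Fintype ι] {x α β : ι → ℝ} {N p : ℕ}

lemma twoSidedMoment_sub {k : ℕ} (hk : k ≤ N) :
    twoSidedMoment x α β N (N - k) = twoSidedMoment x β α N k := by
  simp only [twoSidedMoment, Nat.sub_sub_self hk, add_comm]

lemma sum_mul_abs_pow_le_twoSidedMoment (hβ : 0 ≤ β) (hN : Even N) (hp : Even p) :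
    ∑ l, α l * |x l| ^ p ≤ twoSidedMoment x α β N p := by
  refine Finset.sum_le_sum fun l _ => ?_
  rw [hp.pow_abs]
  exact le_add_of_nonneg_right (mul_nonneg (hβ l) ((hN.tsub hp).pow_nonneg _))

lemma sum_mul_abs_pow_le_twoSidedMoment_sub (hα : 0 ≤ α) (hN : Even N) (hp : Even p)
    (hpN : p ≤ N) : ∑ l, β l * |x l| ^ p ≤ twoSidedMoment x α β N (N - p) := by
  rw [twoSidedMoment_sub hpN]
  exact sum_mul_abs_pow_le_twoSidedMoment hα hN hp

lemma continuous_twoSidedMoment (N k : ℕ) :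
    Continuous fun q : (ι → ℝ) × (ι → ℝ) × (ι → ℝ) => twoSidedMoment q.1 q.2.1 q.2.2 N k := by
  simp only [twoSidedMoment]
  fun_prop

lemma sum_le_of_eq_twoSidedMoment [NeZero n] {H : Matrix (Fin n) (Fin n) ℝ}
    (hα : 0 ≤ α) (hβ : 0 ≤ β)
    (hH : ∀ i j : Fin n, H i j = twoSidedMoment x α β (2 * (n - 1)) (i + j)) :
    ∑ l, α l ≤ H 0 0 ∧ ∑ l, β l ≤ H (Fin.rev 0) (Fin.rev 0) := by
  have hN : Even (2 * (n - 1)) := even_two_mul _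
  rw [hH, hH]
  constructor
  · simpa using sum_mul_abs_pow_le_twoSidedMoment (x := x) (α := α) hβ hN Even.zero
  · simpa [two_mul] using
      sum_mul_abs_pow_le_twoSidedMoment_sub (x := x) (β := β) hα hN Even.zero (Nat.zero_le _)

end

-- Perturb `H` to a positive definite Hankel matrix: the representing parameters stay in a compact
-- box, hence the representable matrices obtained in this way form a closed set.
lemma IsHankel.exists_eq_twoSidedMoment [NeZero n] {H : Matrix (Fin n) (Fin n) ℝ}
    (hH : IsHankel H) (hH' : H.PosSemidef) :
    ∃ x α β : Fin n → ℝ, (∀ l, |x l| ≤ 1) ∧ 0 ≤ α ∧ 0 ≤ β ∧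
      ∀ i j : Fin n, H i j = twoSidedMoment x α β (2 * (n - 1)) (i + j) := by
  obtain ⟨G, G_pos, G_hankel⟩ := exists_posDef_isHankel n
  let momentMatrix (q : (Fin n → ℝ) × (Fin n → ℝ) × (Fin n → ℝ)) : Matrix (Fin n) (Fin n) ℝ :=
    Matrix.of fun i j => twoSidedMoment q.1 q.2.1 q.2.2 (2 * (n - 1)) (i + j)
  let box : Set ((Fin n → ℝ) × (Fin n → ℝ) × (Fin n → ℝ)) :=
    Set.Icc (-1) 1 ×ˢ Set.Icc 0 (fun _ => (H + G) 0 0) ×ˢ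
      Set.Icc 0 (fun _ => (H + G) (Fin.rev 0) (Fin.rev 0))
  have image_closed : IsClosed (momentMatrix '' box) :=
    ((isCompact_Icc.prod (isCompact_Icc.prod isCompact_Icc)).image
      (continuous_matrix fun i j => continuous_twoSidedMoment _ _)).isClosed
  have perturbed_mem (η : ℝ) (hη : η ∈ Set.Ioc (0 : ℝ) 1) :
      H + η • G ∈ momentMatrix '' box := by
    have diag_le (i : Fin n) : (H + η • G) i i ≤ (H + G) i i :=
      add_le_add_right (mul_le_of_le_one_left G_pos.diag_pos.le hη.2) _
    have hankel : IsHankel (H + η • G) := fun i j k l h =>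
      congrArg₂ (fun a b => a + η • b) (hH i j k l h) (G_hankel i j k l h)
    obtain ⟨x, α, β, hx, hα, hβ, eq_moment⟩ := hankel.exists_eq_twoSidedMoment_of_posDef
      (PosDef.posSemidef_add hH' (G_pos.smul hη.1))
    obtain ⟨sum_α_le, sum_β_le⟩ := sum_le_of_eq_twoSidedMoment hα hβ eq_moment
    refine ⟨(x, α, β), ⟨⟨fun l => (abs_le.1 (hx l)).1, fun l => (abs_le.1 (hx l)).2⟩,
      ⟨hα, fun l => ?_⟩, hβ, fun l => ?_⟩, (ext eq_moment).symm⟩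
    · exact (Finset.single_le_sum (fun i _ => hα i) (Finset.mem_univ l)).trans
        (sum_α_le.trans (diag_le _))
    · exact (Finset.single_le_sum (fun i _ => hβ i) (Finset.mem_univ l)).trans
        (sum_β_le.trans (diag_le _))
  have tendsto_H : Filter.Tendsto (fun η : ℝ => H + η • G) (nhdsWithin 0 (Set.Ioi 0)) (nhds H) :=
    tendsto_nhdsWithin_of_tendsto_nhds (Continuous.tendsto' (by fun_prop) _ _ (by simp))
  obtain ⟨⟨x, α, β⟩, ⟨hx, hα, hβ⟩, H_eq⟩ := image_closed.mem_of_tendsto tendsto_H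
    (Filter.eventually_of_mem (Ioc_mem_nhdsGT one_pos) perturbed_mem)
  exact ⟨x, α, β, fun l => abs_le.2 ⟨hx.1 l, hx.2 l⟩, hα.1, hβ.1, fun i j => by rw [← H_eq]; rfl⟩

end Moments

section FrobeniusNorm

open Matrix

variable {n : ℕ}

open scoped Matrix.Norms.Frobenius in
lemma froNorm_eq_norm (A : Matrix (Fin n) (Fin n) ℝ) : froNorm A = ‖A‖ := by
  simp only [froNorm, frobenius_norm_def, Real.sqrt_eq_rpow, Real.rpow_two, Real.norm_eq_abs,
    sq_abs]

lemma froNorm_nonneg (A : Matrix (Fin n) (Fin n) ℝ) : 0 ≤ froNorm A :=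
  Real.sqrt_nonneg _

open scoped Matrix.Norms.Frobenius in
lemma froNorm_add_le (A B : Matrix (Fin n) (Fin n) ℝ) :
    froNorm (A + B) ≤ froNorm A + froNorm B := by
  simpa only [froNorm_eq_norm] using norm_add_le A B

open scoped Matrix.Norms.Frobenius in
lemma froNorm_smul {c : ℝ} (hc : 0 ≤ c) (A : Matrix (Fin n) (Fin n) ℝ) :
    froNorm (c • A) = c * froNorm A := by
  rw [froNorm_eq_norm, froNorm_eq_norm, norm_smul, Real.norm_of_nonneg hc]

lemma froNorm_le_of_abs_le {A B : Matrix (Fin n) (Fin n) ℝ} (h : ∀ i j, |A i j| ≤ |B i j|) :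
    froNorm A ≤ froNorm B :=
  Real.sqrt_le_sqrt <| Finset.sum_le_sum fun i _ => Finset.sum_le_sum fun j _ =>
    sq_le_sq.2 (h i j)

lemma le_froNorm (A : Matrix (Fin n) (Fin n) ℝ) (i j : Fin n) : A i j ≤ froNorm A := by
  refine Real.le_sqrt_of_sq_le ?_
  calc A i j ^ 2 ≤ ∑ j', A i j' ^ 2 :=
        Finset.single_le_sum (fun _ _ => sq_nonneg _) (Finset.mem_univ j)
    _ ≤ ∑ i', ∑ j', A i' j' ^ 2 :=
        Finset.single_le_sum (f := fun i' => ∑ j', A i' j' ^ 2)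
          (fun _ _ => Finset.sum_nonneg fun _ _ => sq_nonneg _) (Finset.mem_univ i)

lemma sum_comp_le_of_card_fiber_le {ι κ : Type*} [Fintype ι] [Fintype κ] [DecidableEq κ]
    {f : ι → κ} {r : ℕ} (hf : ∀ b, (Finset.univ.filter (f · = b)).card ≤ r) {g : κ → ℝ}
    (hg : 0 ≤ g) : ∑ a, g (f a) ≤ r * ∑ b, g b := by
  rw [← Finset.sum_fiberwise' Finset.univ f g, Finset.mul_sum]
  refine Finset.sum_le_sum fun b _ => ?_
  rw [Finset.sum_const, nsmul_eq_mul]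
  exact mul_le_mul_of_nonneg_right (Nat.cast_le.2 (hf b)) (hg b)

lemma froNorm_submatrix_le {m r : ℕ} {f : Fin m → Fin n}
    (hf : ∀ b, (Finset.univ.filter (f · = b)).card ≤ r) (A : Matrix (Fin n) (Fin n) ℝ) :
    froNorm (A.submatrix f f) ≤ r * froNorm A := by
  refine Real.sqrt_le_iff.2 ⟨mul_nonneg r.cast_nonneg (froNorm_nonneg A), ?_⟩
  have row_sq_nonneg (i : Fin n) : 0 ≤ ∑ j, A i j ^ 2 := Finset.sum_nonneg fun _ _ => sq_nonneg _
  calc ∑ i, ∑ j, A (f i) (f j) ^ 2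
      ≤ ∑ i, r * ∑ j, A (f i) j ^ 2 :=
        Finset.sum_le_sum fun i _ => sum_comp_le_of_card_fiber_le hf fun j => sq_nonneg (A (f i) j)
    _ = r * ∑ i, ∑ j, A (f i) j ^ 2 := (Finset.mul_sum _ _ _).symm
    _ ≤ r * (r * ∑ i, ∑ j, A i j ^ 2) := by
        gcongr
        exact sum_comp_le_of_card_fiber_le hf row_sq_nonneg
    _ = (r * froNorm A) ^ 2 := by
        rw [mul_pow, froNorm, Real.sq_sqrt (Finset.sum_nonneg fun i _ => row_sq_nonneg i)]
        ring

end FrobeniusNorm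

section Folding

variable {n : ℕ}

/-- An even index at most `i / 2`. Evenness makes the moments of index `foldIndex i + foldIndex j`
of a positive measure on `[-1, 1]` nonnegative and equal to the absolute moments. -/
def foldIndex (i : Fin n) : Fin n := ⟨2 * (i / 4), by omega⟩

/-- The mirror image of `foldIndex` under `i ↦ n - 1 - i`. -/
def foldIndexRev (i : Fin n) : Fin n := (foldIndex i.rev).rev

lemma card_fiber_foldIndex_le (b : Fin n) :
    (Finset.univ.filter (foldIndex · = b)).card ≤ 4 := by
  refine (Finset.card_le_card_of_injOn (t := Finset.range 4) (fun i => (i : ℕ) % 4)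
    (fun i _ => by simpa using Nat.mod_lt _ four_pos) fun i hi j hj h => ?_)
  have fold_eq : foldIndex i = foldIndex j :=
    (Finset.mem_filter.1 hi).2.trans (Finset.mem_filter.1 hj).2.symm
  have := congrArg Fin.val fold_eq
  simp only [foldIndex] at this h
  omega

lemma card_fiber_foldIndexRev_le (b : Fin n) :
    (Finset.univ.filter (foldIndexRev · = b)).card ≤ 4 := by
  refine le_trans (Finset.card_le_card_of_injOn Fin.rev (fun i hi => ?_)
    Fin.rev_injective.injOn) (card_fiber_foldIndex_le b.rev)
  simpa [foldIndexRev, Fin.rev_eq_iff] using hi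

end Folding

section Approximation

open Matrix

lemma IsPowerNet.coeff_nonneg {T : Finset ℝ} {Λ δ K : ℝ} {N : ℕ} (hT : IsPowerNet T Λ δ K N) :
    0 ≤ Λ := by
  obtain ⟨c, c_le, -⟩ := hT 0 (abs_zero.trans_le zero_le_one)
  exact (Finset.sum_nonneg fun t _ => abs_nonneg (c t)).trans c_le

lemma IsPowerNet.exists_measure_approx {T : Finset ℝ} {Λ δ K : ℝ} {N : ℕ}
    (hT : IsPowerNet T Λ δ K N) {ι : Type*} [Fintype ι] {x w : ι → ℝ} (hx : ∀ l, |x l| ≤ 1)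
    (hw : 0 ≤ w) :
    ∃ d : T → ℝ, ∑ t, |d t| ≤ Λ * ∑ l, w l ∧ ∀ k p : ℕ, K ≤ k → k ≤ N → 2 * p ≤ k →
      |∑ t, d t * (t : ℝ) ^ k - ∑ l, w l * x l ^ k| ≤ δ * ∑ l, w l * |x l| ^ p := by
  choose c c_le c_approx using fun l => hT (x l) (hx l)
  refine ⟨fun t => ∑ l, w l * c l t, ?_, fun k p hk hkN hp => ?_⟩
  · calc ∑ t, |∑ l, w l * c l t| ≤ ∑ t, ∑ l, |w l * c l t| :=
          Finset.sum_le_sum fun t _ => Finset.abs_sum_le_sum_abs _ _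
      _ = ∑ l, w l * ∑ t, |c l t| := by
          rw [Finset.sum_comm]
          simp only [abs_mul, abs_of_nonneg (hw _), Finset.mul_sum]
      _ ≤ ∑ l, w l * Λ := Finset.sum_le_sum fun l _ => mul_le_mul_of_nonneg_left (c_le l) (hw l)
      _ = Λ * ∑ l, w l := by rw [← Finset.sum_mul, mul_comm]
  · calc |∑ t, (∑ l, w l * c l t) * (t : ℝ) ^ k - ∑ l, w l * x l ^ k|
        = |∑ l, w l * (∑ t, c l t * (t : ℝ) ^ k - x l ^ k)| := by
          simp only [mul_sub, Finset.sum_sub_distrib, Finset.sum_mul, Finset.mul_sum, mul_assoc]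
          rw [Finset.sum_comm]
      _ ≤ ∑ l, |w l * (∑ t, c l t * (t : ℝ) ^ k - x l ^ k)| := Finset.abs_sum_le_sum_abs _ _
      _ ≤ ∑ l, w l * (δ * |x l| ^ p) := by
          refine Finset.sum_le_sum fun l _ => ?_
          rw [abs_mul, abs_of_nonneg (hw l)]
          exact mul_le_mul_of_nonneg_left (c_approx l k p hk hkN hp) (hw l)
      _ = δ * ∑ l, w l * |x l| ^ p := by simp only [Finset.mul_sum, mul_left_comm]

lemma IsPowerNet.exists_twoSidedMoment_approx {T : Finset ℝ} {Λ δ K : ℝ} {N : ℕ}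
    (hT : IsPowerNet T Λ δ K N) (hδ : 0 ≤ δ) (hN : Even N) {ι : Type*} [Fintype ι]
    {x α β : ι → ℝ} (hx : ∀ l, |x l| ≤ 1) (hα : 0 ≤ α) (hβ : 0 ≤ β) :
    ∃ d : T ⊕ T → ℝ, ∑ t, |d t| ≤ Λ * (∑ l, α l + ∑ l, β l) ∧
      ∀ k p q : ℕ, k ≤ N → K ≤ k → K ≤ (N - k : ℕ) → Even p → Even q → 2 * p ≤ k →
        2 * q ≤ N - k →
        |twoSidedMoment (fun t : T => (t : ℝ)) (d ∘ Sum.inl) (d ∘ Sum.inr) N k -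
            twoSidedMoment x α β N k| ≤
          δ * (twoSidedMoment x α β N p + twoSidedMoment x α β N (N - q)) := by
  obtain ⟨a, a_le, a_approx⟩ := hT.exists_measure_approx hx hα
  obtain ⟨b, b_le, b_approx⟩ := hT.exists_measure_approx hx hβ
  refine ⟨Sum.elim a b, ?_, fun k p q hkN hk hk' hp hq hpk hqk => ?_⟩
  · rw [Fintype.sum_sum_type, mul_add]
    exact add_le_add a_le b_le
  · simp only [Sum.elim_comp_inl, Sum.elim_comp_inr]
    calc |twoSidedMoment (fun t : T => (t : ℝ)) a b N k - twoSidedMoment x α β N k|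
        = |(∑ t, a t * (t : ℝ) ^ k - ∑ l, α l * x l ^ k) +
            (∑ t, b t * (t : ℝ) ^ (N - k) - ∑ l, β l * x l ^ (N - k))| := by
          simp only [twoSidedMoment, Finset.sum_add_distrib]
          rw [add_sub_add_comm]
      _ ≤ δ * ∑ l, α l * |x l| ^ p + δ * ∑ l, β l * |x l| ^ q :=
          (abs_add_le _ _).trans (add_le_add (a_approx k p hk hkN hpk)
            (b_approx (N - k) q hk' (Nat.sub_le _ _) hqk))
      _ ≤ δ * (twoSidedMoment x α β N p + twoSidedMoment x α β N (N - q)) := by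
          rw [← mul_add]
          gcongr
          · exact sum_mul_abs_pow_le_twoSidedMoment hβ hN hp
          · exact sum_mul_abs_pow_le_twoSidedMoment_sub hα hN hq (by omega)

variable {n : ℕ} {T : Finset ℝ}

lemma bigV_mul_diagonal_mul_transpose_apply (d : T ⊕ T → ℝ) (i j : Fin n) :
    (bigV n T * diagonal d * (bigV n T)ᵀ) i j =
      twoSidedMoment (fun t : T => (t : ℝ)) (d ∘ Sum.inl) (d ∘ Sum.inr) (2 * (n - 1)) (i + j) := by
  have exponent : 2 * (n - 1) - ((i : ℕ) + j) = (n - 1 - i) + (n - 1 - j) := by omega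
  rw [mul_apply]
  simp only [mul_diagonal, transpose_apply, Fintype.sum_sum_type, bigV, of_apply,
    Sum.elim_inl, Sum.elim_inr, twoSidedMoment, Finset.sum_add_distrib, Function.comp_apply,
    exponent, pow_add]
  congr 1 <;> exact Finset.sum_congr rfl fun t _ => by ring

lemma isHankel_bigV_mul_diagonal_mul_transpose (d : T ⊕ T → ℝ) :
    IsHankel (bigV n T * diagonal d * (bigV n T)ᵀ) := fun i j k l h => by
  rw [bigV_mul_diagonal_mul_transpose_apply, bigV_mul_diagonal_mul_transpose_apply, h]

/-- The matrix `A` with its central anti-diagonals, those with `K ≤ i + j ≤ 2 (n - 1) - K`,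
replaced by zero. -/
noncomputable def cornerPart (K : ℝ) (A : Matrix (Fin n) (Fin n) ℝ) : Matrix (Fin n) (Fin n) ℝ :=
  Matrix.of fun i j =>
    if K ≤ (i : ℕ) + (j : ℕ) ∧ ((i : ℕ) + (j : ℕ) : ℝ) ≤ 2 * ((n : ℝ) - 1) - K then 0 else A i j

lemma cornerPart_eq_zero {K : ℝ} (A : Matrix (Fin n) (Fin n) ℝ) {i j : Fin n}
    (h : K ≤ (i : ℕ) + (j : ℕ)) (h' : ((i : ℕ) + (j : ℕ) : ℝ) ≤ 2 * ((n : ℝ) - 1) - K) :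
    cornerPart K A i j = 0 :=
  if_pos ⟨h, h'⟩

lemma IsHankel.cornerPart {A : Matrix (Fin n) (Fin n) ℝ} (hA : IsHankel A) (K : ℝ) :
    IsHankel (cornerPart K A) := fun i j k l h => by
  simp only [_root_.cornerPart, of_apply, hA i j k l h, ← Nat.cast_add, h]

lemma froNorm_add_cornerPart_sub_le {K : ℝ} {A H B : Matrix (Fin n) (Fin n) ℝ}
    (h : ∀ i j : Fin n, K ≤ (i : ℕ) + (j : ℕ) →
      ((i : ℕ) + (j : ℕ) : ℝ) ≤ 2 * ((n : ℝ) - 1) - K → |A i j - H i j| ≤ B i j) :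
    froNorm (A + cornerPart K (H - A) - H) ≤ froNorm B := by
  refine froNorm_le_of_abs_le fun i j => ?_
  rw [Matrix.sub_apply, Matrix.add_apply]
  by_cases central : K ≤ (i : ℕ) + (j : ℕ) ∧ ((i : ℕ) + (j : ℕ) : ℝ) ≤ 2 * ((n : ℝ) - 1) - K
  · rw [cornerPart_eq_zero _ central.1 central.2, add_zero]
    exact (h i j central.1 central.2).trans (le_abs_self _)
  · rw [cornerPart, of_apply, if_neg central, Matrix.sub_apply, add_sub_cancel, sub_self, abs_zero]
    exact abs_nonneg _

lemma IsPowerNet.exists_abs_bigV_apply_sub_le [NeZero n] {Λ δ K : ℝ}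
    (hT : IsPowerNet T Λ δ K (2 * (n - 1))) (hδ : 0 ≤ δ) {H : Matrix (Fin n) (Fin n) ℝ}
    (hH : IsHankel H) (hH' : H.PosSemidef) :
    ∃ d : T ⊕ T → ℝ, ∑ t, |d t| ≤ Λ * (H 0 0 + H (Fin.rev 0) (Fin.rev 0)) ∧
      ∀ i j : Fin n, K ≤ (i : ℕ) + (j : ℕ) →
        ((i : ℕ) + (j : ℕ) : ℝ) ≤ 2 * ((n : ℝ) - 1) - K →
        |(bigV n T * diagonal d * (bigV n T)ᵀ) i j - H i j| ≤
          δ * (H (foldIndex i) (foldIndex j) + H (foldIndexRev i) (foldIndexRev j)) := by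
  obtain ⟨x, α, β, hx, hα, hβ, H_eq⟩ := hH.exists_eq_twoSidedMoment hH'
  obtain ⟨sum_α_le, sum_β_le⟩ := sum_le_of_eq_twoSidedMoment hα hβ H_eq
  obtain ⟨d, d_le, d_approx⟩ := hT.exists_twoSidedMoment_approx hδ (even_two_mul _) hx hα hβ
  refine ⟨d, d_le.trans (mul_le_mul_of_nonneg_left (add_le_add sum_α_le sum_β_le) hT.coeff_nonneg),
    fun i j hK hK' => ?_⟩
  have cast_sub : ((2 * (n - 1) - ((i : ℕ) + j) : ℕ) : ℝ) =
      2 * ((n : ℝ) - 1) - ((i : ℕ) + (j : ℕ)) := by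
    rw [Nat.cast_sub (by omega), Nat.cast_mul, Nat.cast_sub NeZero.one_le]
    push_cast
    rfl
  have reflected : (foldIndexRev i : ℕ) + foldIndexRev j =
      2 * (n - 1) - ((foldIndex i.rev : ℕ) + foldIndex j.rev) := by
    simp only [foldIndexRev, Fin.val_rev]
    omega
  rw [bigV_mul_diagonal_mul_transpose_apply, H_eq, H_eq, H_eq, reflected]
  refine d_approx _ _ _ (by omega) (by exact_mod_cast hK) (by rw [cast_sub]; linarith)
    ((even_two_mul _).add (even_two_mul _)) ((even_two_mul _).add (even_two_mul _)) ?_ ?_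
  · simp only [foldIndex]
    omega
  · simp only [foldIndex, Fin.val_rev]
    omega

lemma IsPowerNet.exists_hankel_approx [NeZero n] {Λ δ K : ℝ}
    (hT : IsPowerNet T Λ δ K (2 * (n - 1))) (hδ : 0 ≤ δ) {H : Matrix (Fin n) (Fin n) ℝ}
    (hH : IsHankel H) (hH' : H.PosSemidef) :
    ∃ (d : T ⊕ T → ℝ) (Hstar : Matrix (Fin n) (Fin n) ℝ), IsHankel Hstar ∧
      (∀ i j : Fin n, K ≤ (i : ℕ) + (j : ℕ) →
        ((i : ℕ) + (j : ℕ) : ℝ) ≤ 2 * ((n : ℝ) - 1) - K → Hstar i j = 0) ∧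
      froNorm (bigV n T * diagonal d * (bigV n T)ᵀ + Hstar - H) ≤ 8 * δ * froNorm H ∧
      ∑ t, |d t| ≤ Λ * (2 * froNorm H) := by
  obtain ⟨d, d_le, d_approx⟩ := hT.exists_abs_bigV_apply_sub_le hδ hH hH'
  set A : Matrix (Fin n) (Fin n) ℝ := bigV n T * diagonal d * (bigV n T)ᵀ
  have hankel_sub : IsHankel (H - A) := fun i j k l h =>
    congrArg₂ (· - ·) (hH i j k l h) (isHankel_bigV_mul_diagonal_mul_transpose d i j k l h)
  refine ⟨d, cornerPart K (H - A), hankel_sub.cornerPart K,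
    fun i j hK hK' => cornerPart_eq_zero _ hK hK', ?_, ?_⟩
  · calc froNorm (A + cornerPart K (H - A) - H)
        ≤ froNorm (δ • (H.submatrix foldIndex foldIndex +
            H.submatrix foldIndexRev foldIndexRev)) := froNorm_add_cornerPart_sub_le d_approx
      _ ≤ δ * (froNorm (H.submatrix foldIndex foldIndex) +
            froNorm (H.submatrix foldIndexRev foldIndexRev)) := by
          rw [froNorm_smul hδ]
          gcongr
          exact froNorm_add_le _ _
      _ ≤ δ * ((4 : ℕ) * froNorm H + (4 : ℕ) * froNorm H) := by
          gcongr
          · exact froNorm_submatrix_le card_fiber_foldIndex_le H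
          · exact froNorm_submatrix_le card_fiber_foldIndexRev_le H
      _ = 8 * δ * froNorm H := by
          push_cast
          ring
  · refine d_le.trans (mul_le_mul_of_nonneg_left ?_ hT.coeff_nonneg)
    rw [two_mul]
    exact add_le_add (le_froNorm H _ _) (le_froNorm H _ _)

end Approximation

section Parameters

lemma one_le_two_mul_log {x : ℝ} (hx : 2 ≤ x) : 1 ≤ 2 * Real.log x := by
  linarith [Real.log_two_gt_d9, Real.log_le_log two_pos hx]

lemma cellCount_le {n : ℕ} (hn : 2 ≤ n) : (cellCount (2 * (n - 1)) : ℝ) ≤ 68 * Real.log n := by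
  have log_le : Real.log ((2 * (n - 1) : ℕ) + 1) ≤ 2 * Real.log n := by
    calc Real.log ((2 * (n - 1) : ℕ) + 1) ≤ Real.log ((n : ℝ) ^ 2) := by
          have := sq_nonneg ((n : ℝ) - 1)
          refine Real.log_le_log (by positivity) ?_
          rw [Nat.cast_mul, Nat.cast_sub (by omega)]
          push_cast
          linarith
      _ = 2 * Real.log n := by rw [Real.log_pow, Nat.cast_two]
  have floor_le := Nat.floor_le (a := 33 * Real.log ((2 * (n - 1) : ℕ) + 1))
    (mul_nonneg (by norm_num) (Real.log_nonneg (by simp)))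
  rw [cellCount, Nat.cast_add, Nat.cast_one]
  linarith [one_le_two_mul_log (Nat.ofNat_le_cast.2 hn)]

lemma pow_four_le_div_eight {ε : ℝ} (hε : 0 < ε) (hε' : ε < 1 / 2) : ε ^ 4 ≤ ε / 8 := by
  calc ε ^ 4 = ε * ε ^ 3 := by ring
    _ ≤ ε * (1 / 2) ^ 3 := by gcongr
    _ = ε / 8 := by ring

lemma exp_neg_four_mul_log_inv_le {ε : ℝ} (hε : 0 < ε) (hε' : ε < 1 / 2) :
    Real.exp (-(8 * Real.log (1 / ε)) / 2) ≤ ε / 8 := by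
  calc Real.exp (-(8 * Real.log (1 / ε)) / 2) = Real.exp ((4 : ℕ) * Real.log ε) := by
        rw [one_div, Real.log_inv]
        push_cast
        ring_nf
    _ = ε ^ 4 := by rw [Real.exp_nat_mul, Real.exp_log hε]
    _ ≤ ε / 8 := pow_four_le_div_eight hε hε'

lemma exists_nat_two_mul_pow_le {ε : ℝ} (hε : 0 < ε) (hε' : ε < 1 / 2) :
    ∃ m : ℕ, 2 * (1 / 4 : ℝ) ^ m ≤ ε / 8 ∧ (m : ℝ) ≤ 7 * Real.log (1 / ε) := by
  have one_le : 1 ≤ 2 * Real.log (1 / ε) :=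
    one_le_two_mul_log ((le_one_div two_pos hε).2 hε'.le)
  have quarter_le : (1 / 4 : ℝ) ≤ Real.exp (-1) := by
    rw [Real.exp_neg, ← one_div]
    exact one_div_le_one_div_of_le (Real.exp_pos 1) (by linarith [Real.exp_one_lt_d9])
  refine ⟨⌈5 * Real.log (1 / ε)⌉₊, ?_, ?_⟩
  · calc 2 * (1 / 4 : ℝ) ^ ⌈5 * Real.log (1 / ε)⌉₊
        ≤ 2 * Real.exp (-1) ^ ⌈5 * Real.log (1 / ε)⌉₊ := by gcongr
      _ ≤ 2 * Real.exp ((5 : ℕ) * Real.log ε) := by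
          rw [← Real.exp_nat_mul]
          refine mul_le_mul_of_nonneg_left (Real.exp_le_exp.2 ?_) zero_le_two
          have := Nat.le_ceil (5 * Real.log (1 / ε))
          rw [one_div, Real.log_inv] at this ⊢
          push_cast
          linarith
      _ = 2 * ε * ε ^ 4 := by rw [Real.exp_nat_mul, Real.exp_log hε]; ring
      _ ≤ 1 * ε ^ 4 := by gcongr; linarith
      _ ≤ ε / 8 := (one_mul _).trans_le (pow_four_le_div_eight hε hε')
  · linarith [Nat.ceil_lt_add_one (a := 5 * Real.log (1 / ε)) (by linarith)]

end Parameters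

/-- A universal node set `T` (depending only on `n` and `ε`) such that every
PSD Hankel matrix `H` is approximated by `V D* Vᵀ + H*` with `D*` diagonal of bounded trace
norm and `H*` a Hankel matrix supported on the first and last `O(ln(1/ε))` anti-diagonals. -/
theorem universal_vandermonde_approx :
    ∃ C C' : ℝ, 0 < C ∧ 0 < C' ∧
      ∀ (n : ℕ), 2 ≤ n → ∀ ε : ℝ, 0 < ε → ε < 1 / 2 →
        ∃ T : Finset ℝ, (T.card : ℝ) ≤ C * Real.log n * Real.log (1 / ε) ∧
          ∀ H : Matrix (Fin n) (Fin n) ℝ, H.PosSemidef → IsHankel H →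
            ∃ (d : (T ⊕ T : Type) → ℝ) (Hstar : Matrix (Fin n) (Fin n) ℝ),
              IsHankel Hstar ∧
              (∀ i j : Fin n,
                C' * Real.log (1 / ε) ≤ ((i : ℕ) + (j : ℕ) : ℝ) →
                ((i : ℕ) + (j : ℕ) : ℝ) ≤ 2 * ((n : ℝ) - 1) - C' * Real.log (1 / ε) →
                Hstar i j = 0) ∧
              froNorm (bigV n T * Matrix.diagonal d * (bigV n T).transpose + Hstar - H) ≤
                ε * froNorm H ∧
              (∑ i, |d i|) ≤ C * Real.log (1 / ε) * Real.log n * froNorm H := by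
  refine ⟨1428, 8, by norm_num, by norm_num, fun n hn ε hε hε' => ?_⟩
  have : NeZero n := ⟨by omega⟩
  obtain ⟨m, pow_le, m_le⟩ := exists_nat_two_mul_pow_le hε hε'
  obtain ⟨v, hv⟩ := exists_isFekete isCompact_Icc (Set.Icc_infinite (zero_lt_one' ℝ)) m
  have net := hv.isPowerNet_powerNet (N := 2 * (n - 1)) (by omega) pow_le
    (exp_neg_four_mul_log_inv_le hε hε')
  refine ⟨powerNet (2 * (n - 1)) v, ?_, fun H hH hH' => ?_⟩
  · calc ((powerNet (2 * (n - 1)) v).card : ℝ) ≤ 3 * (cellCount (2 * (n - 1)) * m) := by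
          exact_mod_cast card_powerNet_le _ v
      _ ≤ 3 * (68 * Real.log n * (7 * Real.log (1 / ε))) := by
          gcongr
          exact cellCount_le hn
      _ = 1428 * Real.log n * Real.log (1 / ε) := by ring
  · obtain ⟨d, Hstar, hankel, central, error_le, sum_le⟩ :=
      net.exists_hankel_approx (by positivity) hH' hH
    refine ⟨d, Hstar, hankel, central, error_le.trans_eq (by ring), sum_le.trans ?_⟩
    have one_le : 1 ≤ 102 * Real.log n := by linarith [one_le_two_mul_log (Nat.ofNat_le_cast.2 hn)]
    have := froNorm_nonneg H
    calc m * (2 * froNorm H) = 1 * m * (2 * froNorm H) := by ring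
      _ ≤ 102 * Real.log n * (7 * Real.log (1 / ε)) * (2 * froNorm H) := by gcongr
      _ = 1428 * Real.log (1 / ε) * Real.log n * froNorm H := by ring
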